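/- arXiv:2304.11692 — 5 statements merged into one kernel-verified Lean document; each statement's English description precedes it below -/
import Mathlib

section
/- Let Y be a real Gaussian random variable with mean μ and standard deviation σ > 0, and let X = max(Y, 0). Then for every real t, the moment generating function of X satisfies E[e^{tX}] = φ(−μ/σ) + exp(μt + σ²t²/2)·(1 − φ(−(μ + σ²t)/σ)). -/
open MeasureTheory ProbabilityTheory

/-- The cumulative distribution function of the standard normal distribution. -/
noncomputable def stdNormalCDF (x : ℝ) : ℝ :=
  ∫ t in Set.Iic x, (Real.sqrt (2 * Real.pi))⁻¹ * Real.exp (-t ^ 2 / 2)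

/-!
Splitting the expectation according to the sign of `Y` gives `P(Y ≤ 0) + E[e^{tY}; Y > 0]`. The
second summand is `E[e^{tY}]` times the probability of `(0, ∞)` under the law of `Y` tilted by
`e^{ty}`. Tilting by `e^{ty}` replaces a moment generating function `M` by `u ↦ M(t + u) / M(t)`,
which for `N(μ, σ²)` is that of `N(μ + σ²t, σ²)`, so the tilted law is this Gaussian. Standardizing
expresses both probabilities through `φ`.
-/

open Set
open scoped NNReal

section Tilting

variable {Ω : Type*} {mΩ : MeasurableSpace Ω} {P : Measure Ω} {X : Ω → ℝ} {t : ℝ}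

lemma mgf_tilted_mul (u : ℝ) :
    mgf X (P.tilted (t * X ·)) u = mgf X P (t + u) / mgf X P t := by
  simp only [mgf, integral_exp_tilted, Pi.add_apply, add_mul]

lemma setIntegral_exp_eq_integral_exp_mul_tilted [SFinite P] {f : Ω → ℝ}
    (hf : Integrable (fun ω ↦ Real.exp (f ω)) P) (s : Set Ω) :
    ∫ ω in s, Real.exp (f ω) ∂P = (∫ ω, Real.exp (f ω) ∂P) * (P.tilted f).real s := by
  rcases eq_zero_or_neZero P with rfl | _
  · simp
  · have hpos : 0 < ∫ ω, Real.exp (f ω) ∂P := integral_exp_pos hf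
    rw [measureReal_def, tilted_apply_eq_ofReal_integral, integral_div,
      ENNReal.toReal_ofReal (by positivity), mul_div_cancel₀ _ hpos.ne']

lemma integrable_exp_mul_max_const [IsFiniteMeasure P] (hX : AEMeasurable X P)
    (ht : Integrable (fun ω ↦ Real.exp (t * X ω)) P) (c : ℝ) :
    Integrable (fun ω ↦ Real.exp (t * max (X ω) c)) P := by
  refine (ht.add (integrable_const (Real.exp (t * c)))).mono'
    (AEMeasurable.aestronglyMeasurable (by fun_prop)) (.of_forall fun ω ↦ ?_)
  rw [Real.norm_of_nonneg (Real.exp_pos _).le, Pi.add_apply]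
  rcases max_choice (X ω) c with h | h <;> rw [h]
  · exact le_add_of_nonneg_right (Real.exp_pos _).le
  · exact le_add_of_nonneg_left (Real.exp_pos _).le

lemma mgf_max_const [IsFiniteMeasure P] (hX : AEMeasurable X P)
    (ht : Integrable (fun ω ↦ Real.exp (t * X ω)) P) (c : ℝ) :
    mgf (fun ω ↦ max (X ω) c) P t =
      Real.exp (t * c) * P.real (X ⁻¹' Iic c) +
        mgf X P t * (P.tilted (t * X ·)).real (X ⁻¹' Ioi c) := by
  have hs : NullMeasurableSet (X ⁻¹' Iic c) P := hX.nullMeasurableSet_preimage measurableSet_Iic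
  have hle : EqOn (fun ω ↦ Real.exp (t * max (X ω) c)) (fun _ ↦ Real.exp (t * c))
      (X ⁻¹' Iic c) := fun ω hω ↦ by
    rw [mem_preimage, mem_Iic] at hω
    simp only [max_eq_right hω]
  have hgt : EqOn (fun ω ↦ Real.exp (t * max (X ω) c)) (fun ω ↦ Real.exp (t * X ω))
      (X ⁻¹' Iic c)ᶜ := fun ω hω ↦ by
    rw [mem_compl_iff, mem_preimage, mem_Iic, not_le] at hω
    simp only [max_eq_left hω.le]
  rw [mgf, ← integral_add_compl₀ hs (integrable_exp_mul_max_const hX ht c),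
    setIntegral_congr_fun₀ hs hle, setIntegral_congr_fun₀ hs.compl hgt, setIntegral_const,
    smul_eq_mul, mul_comm, setIntegral_exp_eq_integral_exp_mul_tilted ht, ← preimage_compl,
    compl_Iic, mgf]

end Tilting

lemma map_eq_map_of_mgf_eq {Ω Ω' : Type*} {mΩ : MeasurableSpace Ω} {mΩ' : MeasurableSpace Ω'}
    {P : Measure Ω} {P' : Measure Ω'} [IsProbabilityMeasure P] [IsFiniteMeasure P']
    {X : Ω → ℝ} {Y : Ω' → ℝ} (hX : AEMeasurable X P) (hY : AEMeasurable Y P')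
    (h0 : 0 ∈ interior (integrableExpSet X P)) (h : mgf X P = mgf Y P') :
    P.map X = P'.map Y := by
  refine Measure.ext_of_charFun (funext fun u ↦ ?_)
  rw [← complexMGF_mul_I hX, ← complexMGF_mul_I hY]
  exact eqOn_complexMGF_of_mgf h (by simpa using h0)

lemma stdNormalCDF_eq_cdf (x : ℝ) : stdNormalCDF x = cdf (gaussianReal 0 1) x := by
  rw [cdf_eq_real, measureReal_def, gaussianReal_apply_eq_integral _ one_ne_zero,
    ENNReal.toReal_ofReal (integral_nonneg fun y ↦ gaussianPDFReal_nonneg 0 1 y)]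
  simp [stdNormalCDF, gaussianPDFReal]

section Gaussian

variable (μ : ℝ) {v : ℝ≥0}

lemma gaussianReal_tilted_mul (t : ℝ) :
    (gaussianReal μ v).tilted (t * ·) = gaussianReal (μ + v * t) v := by
  have hmgf : mgf id (gaussianReal (μ + v * t) v) = mgf id ((gaussianReal μ v).tilted (t * ·)) := by
    ext u
    refine Eq.trans ?_ (mgf_tilted_mul (X := id) u).symm
    simp only [mgf_id_gaussianReal, ← Real.exp_sub]
    ring_nf
  simpa using (map_eq_map_of_mgf_eq aemeasurable_id aemeasurable_id (by simp) hmgf).symm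

lemma gaussianReal_map_standardize (hv : v ≠ 0) :
    (gaussianReal μ v).map (fun x ↦ (x - μ) / √v) = gaussianReal 0 1 := by
  have hvar : v / .mk (√v ^ 2) (sq_nonneg _) = 1 := by
    ext
    simp [hv]
  have hlaw := gaussianReal_div_const (gaussianReal_sub_const HasLaw.id (μ := μ) (v := v) μ) √v
  rw [sub_self, zero_div, hvar] at hlaw
  exact hlaw.map_eq

lemma cdf_gaussianReal (hv : v ≠ 0) (x : ℝ) :
    cdf (gaussianReal μ v) x = stdNormalCDF ((x - μ) / √v) := by
  have hpre : (fun y ↦ (y - μ) / √v) ⁻¹' Iic ((x - μ) / √v) = Iic x := by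
    have hsqrt : 0 < √(v : ℝ) := by positivity
    ext y
    simp [div_le_div_iff_of_pos_right hsqrt]
  rw [stdNormalCDF_eq_cdf, cdf_eq_real, cdf_eq_real, ← gaussianReal_map_standardize μ hv,
    map_measureReal_apply (by fun_prop) measurableSet_Iic, hpre]

end Gaussian

theorem relu_gaussian_mgf {Ω : Type*} [MeasurableSpace Ω] (P : Measure Ω)
    [IsProbabilityMeasure P] (μ σ : ℝ) (hσ : 0 < σ) (Y : Ω → ℝ)
    (hY : P.map Y = gaussianReal μ ⟨σ ^ 2, sq_nonneg σ⟩) (t : ℝ) :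
    mgf (fun ω => max (Y ω) 0) P t =
      stdNormalCDF (-(μ / σ)) +
        Real.exp (μ * t + σ ^ 2 * t ^ 2 / 2) *
          (1 - stdNormalCDF (-((μ + σ ^ 2 * t) / σ))) := by
  obtain ⟨v, hvσ, hY⟩ : ∃ v : ℝ≥0, (v : ℝ) = σ ^ 2 ∧ P.map Y = gaussianReal μ v := ⟨_, rfl, hY⟩
  have hv : v ≠ 0 := NNReal.coe_ne_zero.mp (hvσ ▸ (pow_pos hσ 2).ne')
  have hYm : AEMeasurable Y P := aemeasurable_of_map_neZero (by rw [hY]; infer_instance)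
  have hcdf (m : ℝ) : (gaussianReal m v).real (Iic 0) = stdNormalCDF (-(m / σ)) := by
    rw [← cdf_eq_real, cdf_gaussianReal m hv, hvσ, Real.sqrt_sq hσ.le, zero_sub, neg_div]
  calc mgf (fun ω ↦ max (Y ω) 0) P t
    _ = mgf (fun y ↦ max y 0) (gaussianReal μ v) t := by
      rw [← hY, mgf_map hYm (Continuous.aestronglyMeasurable (by fun_prop)), Function.comp_def]
    _ = (gaussianReal μ v).real (Iic 0) +
          mgf id (gaussianReal μ v) t * (gaussianReal (μ + v * t) v).real (Ioi 0) := by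
      rw [← gaussianReal_tilted_mul]
      simpa using mgf_max_const aemeasurable_id (integrable_exp_mul_gaussianReal t) 0
    _ = _ := by
      rw [← compl_Iic, probReal_compl_eq_one_sub measurableSet_Iic, hcdf, hcdf,
        mgf_id_gaussianReal, hvσ]
end

section
/- C(R) tends to 1 as R tends to +∞. -/
/-!
Put `g = exp (-R²) / √π`. Since `erfc (-R) = 2 - erfc R`, the terms of `D R` that are quadratic
in `R` combine to `R² erfc (-R) (2 - erfc (-R)) = R² erfc (-R) erfc R`, so that
`D R = erfc (-R) (1 + R² erfc R) - 2 R g (1 - erfc R) - g²`. The Gaussian tail bound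
`x erfc x ≤ exp (-x²) / √π`, obtained by integrating `x exp (-t²) ≤ t exp (-t²)` over `t > x`,
makes `erfc R` decay faster than any power of `R`. Hence `erfc (-R)` and `D R` both tend to `2`.
-/

open MeasureTheory Filter

/-- The complementary error function. -/
noncomputable def erfc (x : ℝ) : ℝ :=
  2 / Real.sqrt Real.pi * ∫ t in Set.Ioi x, Real.exp (-t ^ 2)

/-- The denominator of the explosion-rate bound. -/
noncomputable def D (R : ℝ) : ℝ :=
  (1 + 2 * R ^ 2) * erfc (-R) + 2 * R * Real.exp (-R ^ 2) / Real.sqrt Real.pi -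
    (R * erfc (-R) + Real.exp (-R ^ 2) / Real.sqrt Real.pi) ^ 2

/-- The explosion-rate bound. -/
noncomputable def C (R : ℝ) : ℝ := erfc (-R) / D R

open Real Set Topology

section EvenIntegral

variable {E : Type*} [NormedAddCommGroup E] [NormedSpace ℝ E] {f : ℝ → E}

theorem integral_Iic_neg_of_even (hf : f.Even) (a : ℝ) :
    ∫ t in Iic (-a), f t = ∫ t in Ioi a, f t := by
  simpa only [hf _] using (integral_comp_neg_Ioi a f).symm

theorem integral_Ioi_neg_add_integral_Ioi_of_even (hf : f.Even) (hint : Integrable f) (a : ℝ) :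
    (∫ t in Ioi (-a), f t) + ∫ t in Ioi a, f t = ∫ t, f t := by
  rw [← integral_Iic_neg_of_even hf a, add_comm]
  exact intervalIntegral.integral_Iic_add_Ioi hint.integrableOn hint.integrableOn

end EvenIntegral

section GaussianTail

variable {b : ℝ}

theorem tendsto_pow_mul_exp_neg_mul_sq_atTop (n : ℕ) (hb : 0 < b) :
    Tendsto (fun x : ℝ ↦ x ^ n * exp (-b * x ^ 2)) atTop (𝓝 0) := by
  have hexp : Tendsto (fun x : ℝ ↦ exp (-(1 / 2) * x)) atTop (𝓝 0) :=
    tendsto_exp_atBot.comp (tendsto_id.const_mul_atTop_of_neg (by norm_num))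
  simpa only [rpow_natCast] using
    (rpow_mul_exp_neg_mul_sq_isLittleO_exp_neg hb n).trans_tendsto hexp

theorem integral_Ioi_mul_exp_neg_mul_sq (hb : 0 < b) (a : ℝ) :
    ∫ t in Ioi a, t * exp (-b * t ^ 2) = exp (-b * a ^ 2) / (2 * b) := by
  have hderiv (t : ℝ) :
      HasDerivAt (fun t ↦ -(2 * b)⁻¹ * exp (-b * t ^ 2)) (t * exp (-b * t ^ 2)) t := by
    refine (((hasDerivAt_pow 2 t).const_mul (-b)).exp.const_mul (-(2 * b)⁻¹)).congr_deriv ?_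
    push_cast
    field_simp
  have hlim : Tendsto (fun t : ℝ ↦ -(2 * b)⁻¹ * exp (-b * t ^ 2)) atTop (𝓝 0) := by
    simpa using (tendsto_pow_mul_exp_neg_mul_sq_atTop 0 hb).const_mul (-(2 * b)⁻¹)
  rw [integral_Ioi_of_hasDerivAt_of_tendsto' (fun t _ ↦ hderiv t)
    (integrable_mul_exp_neg_mul_sq hb).integrableOn hlim]
  ring

theorem mul_integral_Ioi_exp_neg_mul_sq_le (hb : 0 < b) (a : ℝ) :
    a * ∫ t in Ioi a, exp (-b * t ^ 2) ≤ exp (-b * a ^ 2) / (2 * b) := by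
  rw [← integral_Ioi_mul_exp_neg_mul_sq hb, ← integral_const_mul]
  refine setIntegral_mono_on ((integrable_exp_neg_mul_sq hb).const_mul a).integrableOn
    (integrable_mul_exp_neg_mul_sq hb).integrableOn measurableSet_Ioi fun t ht ↦ ?_
  gcongr
  exact (mem_Ioi.mp ht).le

end GaussianTail

theorem erfc_nonneg (x : ℝ) : 0 ≤ erfc x :=
  mul_nonneg (by positivity) (integral_nonneg fun _ ↦ (exp_pos _).le)

theorem erfc_neg (x : ℝ) : erfc (-x) = 2 - erfc x := by
  have heven : Function.Even fun t : ℝ ↦ exp (-t ^ 2) := fun t ↦ by simp only [neg_sq]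
  have hint : Integrable fun t : ℝ ↦ exp (-t ^ 2) := by
    simpa using integrable_exp_neg_mul_sq one_pos
  have hgauss : ∫ t : ℝ, exp (-t ^ 2) = √π := by simpa using integral_gaussian 1
  rw [eq_sub_iff_add_eq, erfc, erfc, ← mul_add,
    integral_Ioi_neg_add_integral_Ioi_of_even heven hint, hgauss]
  exact div_mul_cancel₀ 2 (sqrt_pos.mpr pi_pos).ne'

theorem mul_erfc_le_exp_neg_sq_div_sqrt_pi (x : ℝ) : x * erfc x ≤ exp (-x ^ 2) / √π := by
  have htail : x * ∫ t in Ioi x, exp (-t ^ 2) ≤ exp (-x ^ 2) / 2 := by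
    simpa using mul_integral_Ioi_exp_neg_mul_sq_le one_pos x
  calc x * erfc x = 2 / √π * (x * ∫ t in Ioi x, exp (-t ^ 2)) := mul_left_comm _ _ _
    _ ≤ 2 / √π * (exp (-x ^ 2) / 2) := by gcongr
    _ = exp (-x ^ 2) / √π := by ring

theorem tendsto_pow_mul_exp_neg_sq_div_sqrt_pi_atTop (n : ℕ) :
    Tendsto (fun x : ℝ ↦ x ^ n * (exp (-x ^ 2) / √π)) atTop (𝓝 0) := by
  simpa [mul_div_assoc] using
    (tendsto_pow_mul_exp_neg_mul_sq_atTop n one_pos).div_const √π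

theorem tendsto_pow_mul_erfc_atTop (n : ℕ) :
    Tendsto (fun x ↦ x ^ n * erfc x) atTop (𝓝 0) := by
  refine squeeze_zero' ?_ ?_ (tendsto_pow_mul_exp_neg_sq_div_sqrt_pi_atTop n)
  · filter_upwards [eventually_ge_atTop 0] with x hx
    exact mul_nonneg (pow_nonneg hx n) (erfc_nonneg x)
  · filter_upwards [eventually_ge_atTop 1] with x hx
    gcongr
    exact (le_mul_of_one_le_left (erfc_nonneg x) hx).trans (mul_erfc_le_exp_neg_sq_div_sqrt_pi x)

theorem tendsto_erfc_atTop : Tendsto erfc atTop (𝓝 0) := by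
  simpa using tendsto_pow_mul_erfc_atTop 0

theorem tendsto_erfc_neg_atTop : Tendsto (fun x ↦ erfc (-x)) atTop (𝓝 2) := by
  simpa [erfc_neg] using tendsto_erfc_atTop.const_sub 2

theorem D_eq (R : ℝ) :
    D R = erfc (-R) * (1 + R ^ 2 * erfc R) - 2 * (R * (exp (-R ^ 2) / √π)) * (1 - erfc R) -
      (exp (-R ^ 2) / √π) ^ 2 := by
  rw [D, erfc_neg]
  ring

theorem tendsto_D_atTop : Tendsto D atTop (𝓝 2) := by
  have hexp : Tendsto (fun R : ℝ ↦ exp (-R ^ 2) / √π) atTop (𝓝 0) := by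
    simpa using tendsto_pow_mul_exp_neg_sq_div_sqrt_pi_atTop 0
  have hmul_exp : Tendsto (fun R : ℝ ↦ R * (exp (-R ^ 2) / √π)) atTop (𝓝 0) := by
    simpa using tendsto_pow_mul_exp_neg_sq_div_sqrt_pi_atTop 1
  have hlim := ((tendsto_erfc_neg_atTop.mul ((tendsto_pow_mul_erfc_atTop 2).const_add 1)).sub
    ((hmul_exp.const_mul 2).mul (tendsto_erfc_atTop.const_sub 1))).sub (hexp.pow 2)
  rw [funext D_eq]
  simpa using hlim

theorem C_tendsto_atTop : Tendsto C atTop (nhds 1) := by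
  have h : Tendsto C atTop (𝓝 (2 / 2)) :=
    tendsto_erfc_neg_atTop.div tendsto_D_atTop two_ne_zero
  rwa [div_self two_ne_zero] at h
end

section
/- C(R) tends to +∞ as R tends to −∞. -/
/-!
Put `x = -R` and let `Mₖ = (2/√π) ∫ₓ^∞ (t - x)ᵏ exp (-t²) dt`, so that `M₀ = erfc x`. Integrating by
parts gives `M₁ + x M₀ = exp (-x²)/√π` and `(k + 1) Mₖ = 2 Mₖ₊₂ + 2 x Mₖ₊₁`, which turn the
denominator into `D R = 2 M₂ - M₁²`. It is positive, since `M₁² ≤ M₀ M₂` by Cauchy-Schwarz and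
`M₀ < 2`, the mass of the weight `(2/√π) exp (-t²)` on the whole line. For `x ≥ 0` the recursion
gives `2 x² M₂ ≤ 2 x M₁ ≤ M₀`, so `R² D R ≤ M₀`, that is, `R² ≤ C R`.
-/

open MeasureTheory Filter

open Polynomial (derivative X)
open scoped Polynomial

lemma integrable_pow_mul_exp_neg_sq (k : ℕ) :
    Integrable fun t : ℝ => t ^ k * Real.exp (-t ^ 2) := by
  have hk : (-1 : ℝ) < k := neg_one_lt_zero.trans_le k.cast_nonneg
  simpa using integrable_rpow_mul_exp_neg_mul_sq one_pos hk

lemma integrable_eval_mul_exp_neg_sq (p : ℝ[X]) :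
    Integrable fun t : ℝ => p.eval t * Real.exp (-t ^ 2) := by
  induction p using Polynomial.induction_on' with
  | add p q hp hq =>
    simp only [Polynomial.eval_add, add_mul]
    exact hp.add hq
  | monomial k a =>
    simpa only [Polynomial.eval_monomial, mul_assoc] using
      (integrable_pow_mul_exp_neg_sq k).const_mul a

lemma hasDerivAt_eval_mul_exp_neg_sq (p : ℝ[X]) (t : ℝ) :
    HasDerivAt (fun t : ℝ => p.eval t * Real.exp (-t ^ 2))
      ((derivative p - (2 : ℝ) • (X * p)).eval t * Real.exp (-t ^ 2)) t := by
  have hexp : HasDerivAt (fun t : ℝ => Real.exp (-t ^ 2)) (Real.exp (-t ^ 2) * -(2 * t)) t := by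
    simpa using (hasDerivAt_pow 2 t).fun_neg.exp
  refine ((p.hasDerivAt t).fun_mul hexp).congr_deriv ?_
  simp only [Polynomial.eval_sub, Polynomial.eval_smul, Polynomial.eval_mul, Polynomial.eval_X,
    smul_eq_mul]
  ring

lemma integral_Ioi_derivative_sub_mul_exp_neg_sq (p : ℝ[X]) (x : ℝ) :
    ∫ t in Set.Ioi x, (derivative p - (2 : ℝ) • (X * p)).eval t * Real.exp (-t ^ 2) =
      -(p.eval x * Real.exp (-x ^ 2)) := by
  have hderiv := hasDerivAt_eval_mul_exp_neg_sq p
  have hint := (integrable_eval_mul_exp_neg_sq p).integrableOn (s := Set.Ioi x)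
  have hint' := (integrable_eval_mul_exp_neg_sq
    (derivative p - (2 : ℝ) • (X * p))).integrableOn (s := Set.Ioi x)
  have hlim := tendsto_zero_of_hasDerivAt_of_integrableOn_Ioi (fun t _ => hderiv t) hint' hint
  rw [integral_Ioi_of_hasDerivAt_of_tendsto' (fun t _ => hderiv t) hint' hlim, zero_sub]

lemma erfc_lt_two (x : ℝ) : erfc x < 2 := by
  have hint : Integrable fun t : ℝ => Real.exp (-t ^ 2) := by
    simpa only [pow_zero, one_mul] using integrable_pow_mul_exp_neg_sq 0
  have hIic : 0 < ∫ t in Set.Iic x, Real.exp (-t ^ 2) := by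
    have : NeZero (volume.restrict (Set.Iic x)) := ⟨by simp⟩
    exact integral_exp_pos hint.integrableOn
  have hsum : (∫ t in Set.Iic x, Real.exp (-t ^ 2)) + ∫ t in Set.Ioi x, Real.exp (-t ^ 2) =
      √Real.pi := by
    rw [intervalIntegral.integral_Iic_add_Ioi hint.integrableOn hint.integrableOn]
    simpa using integral_gaussian 1
  have hpi : 0 < √Real.pi := Real.sqrt_pos.2 Real.pi_pos
  rw [erfc, div_mul_eq_mul_div, div_lt_iff₀ hpi]
  linarith

/-- Integration of polynomials against the Gaussian weight `(2/√π) exp (-t²)` on `(x, ∞)`, the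
normalization being the one for which the total mass is `erfc x`. -/
noncomputable def erfcFunctional (x : ℝ) : ℝ[X] →ₗ[ℝ] ℝ where
  toFun p := 2 / √Real.pi * ∫ t in Set.Ioi x, p.eval t * Real.exp (-t ^ 2)
  map_add' p q := by
    simp only [Polynomial.eval_add, add_mul]
    rw [integral_add (integrable_eval_mul_exp_neg_sq p).integrableOn
      (integrable_eval_mul_exp_neg_sq q).integrableOn, mul_add]
  map_smul' a p := by
    simp only [Polynomial.eval_smul, smul_eq_mul, mul_assoc, integral_const_mul, RingHom.id_apply]
    ring

namespace erfcFunctional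

lemma apply_def (x : ℝ) (p : ℝ[X]) :
    erfcFunctional x p = 2 / √Real.pi * ∫ t in Set.Ioi x, p.eval t * Real.exp (-t ^ 2) :=
  rfl

lemma apply_one (x : ℝ) : erfcFunctional x 1 = erfc x := by
  simp only [apply_def, erfc, Polynomial.eval_one, one_mul]

lemma apply_derivative (x : ℝ) (p : ℝ[X]) :
    erfcFunctional x (derivative p) =
      2 * erfcFunctional x (X * p) - 2 / √Real.pi * (p.eval x * Real.exp (-x ^ 2)) := by
  have hparts : erfcFunctional x (derivative p - (2 : ℝ) • (X * p)) =
      2 / √Real.pi * -(p.eval x * Real.exp (-x ^ 2)) := by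
    rw [apply_def, integral_Ioi_derivative_sub_mul_exp_neg_sq]
  rw [map_sub, map_smul, smul_eq_mul] at hparts
  linarith

lemma apply_pos {x : ℝ} {p : ℝ[X]} (hp : ∀ t, x < t → 0 < p.eval t) :
    0 < erfcFunctional x p := by
  have hpos : ∀ t ∈ Set.Ioi x, 0 < p.eval t * Real.exp (-t ^ 2) := fun t ht =>
    mul_pos (hp t ht) (Real.exp_pos _)
  have hsupp : Set.Ioi x ⊆ Function.support fun t : ℝ => p.eval t * Real.exp (-t ^ 2) :=
    fun t ht => (hpos t ht).ne'
  refine mul_pos (by positivity) ((setIntegral_pos_iff_support_of_nonneg_ae ?_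
    (integrable_eval_mul_exp_neg_sq p).integrableOn).2 ?_)
  · exact ae_restrict_of_forall_mem measurableSet_Ioi fun t ht => (hpos t ht).le
  · rw [Set.inter_eq_right.2 hsupp, Real.volume_Ioi]
    exact ENNReal.zero_lt_top

lemma apply_mul_self_nonneg (x : ℝ) (p : ℝ[X]) : 0 ≤ erfcFunctional x (p * p) := by
  refine mul_nonneg (by positivity) (integral_nonneg fun t => ?_)
  rw [Polynomial.eval_mul]
  exact mul_nonneg (mul_self_nonneg _) (Real.exp_pos _).le

lemma apply_mul_sq_le (x : ℝ) (p q : ℝ[X]) :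
    erfcFunctional x (p * q) ^ 2 ≤ erfcFunctional x (p * p) * erfcFunctional x (q * q) :=
  LinearMap.BilinForm.apply_sq_le_of_symm ((LinearMap.mul ℝ ℝ[X]).compr₂ (erfcFunctional x))
    (apply_mul_self_nonneg x) ⟨fun p q => congrArg (erfcFunctional x) (mul_comm p q)⟩ p q

end erfcFunctional

/-- The moment of order `k` about `x` of the weight `(2/√π) exp (-t²)` on `(x, ∞)`. In terms of
the iterated integrals `iᵏ erfc` of the complementary error function, it is `k! · iᵏ erfc x`. -/
noncomputable def erfcMoment (k : ℕ) (x : ℝ) : ℝ :=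
  erfcFunctional x ((X - Polynomial.C x) ^ k)

namespace erfcMoment

lemma zero_eq_erfc (x : ℝ) : erfcMoment 0 x = erfc x := by
  rw [erfcMoment, pow_zero, erfcFunctional.apply_one]

lemma pos (k : ℕ) (x : ℝ) : 0 < erfcMoment k x :=
  erfcFunctional.apply_pos fun t ht => by simpa using pow_pos (sub_pos.2 ht) k

lemma erfcFunctional_X_mul (k : ℕ) (x : ℝ) :
    erfcFunctional x (X * (X - Polynomial.C x) ^ k) =
      erfcMoment (k + 1) x + x * erfcMoment k x := by
  have hsplit : X * (X - Polynomial.C x) ^ k =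
      (X - Polynomial.C x) ^ (k + 1) + x • (X - Polynomial.C x) ^ k := by
    rw [Polynomial.smul_eq_C_mul]
    ring
  rw [hsplit, map_add, map_smul, smul_eq_mul, erfcMoment, erfcMoment]

lemma one_add_mul_erfc_eq (x : ℝ) :
    erfcMoment 1 x + x * erfc x = Real.exp (-x ^ 2) / √Real.pi := by
  have hparts := erfcFunctional.apply_derivative x 1
  have hX := erfcFunctional_X_mul 0 x
  rw [pow_zero, zero_eq_erfc, zero_add] at hX
  rw [Polynomial.derivative_one, map_zero, hX, Polynomial.eval_one, one_mul] at hparts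
  linear_combination -hparts / 2

lemma add_one_mul_eq (k : ℕ) (x : ℝ) :
    (k + 1) * erfcMoment k x = 2 * erfcMoment (k + 2) x + 2 * x * erfcMoment (k + 1) x := by
  have hparts := erfcFunctional.apply_derivative x ((X - Polynomial.C x) ^ (k + 1))
  have hderiv : derivative ((X - Polynomial.C x) ^ (k + 1)) =
      (k + 1 : ℝ) • (X - Polynomial.C x) ^ k := by
    rw [Polynomial.derivative_X_sub_C_pow, Polynomial.smul_eq_C_mul]
    simp
  have heval : ((X - Polynomial.C x) ^ (k + 1)).eval x = 0 := by simp
  rw [hderiv, map_smul, smul_eq_mul, erfcFunctional_X_mul, heval] at hparts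
  unfold erfcMoment at hparts ⊢
  linarith

lemma two_mul_mul_succ_le (k : ℕ) (x : ℝ) :
    2 * x * erfcMoment (k + 1) x ≤ (k + 1) * erfcMoment k x := by
  linarith [add_one_mul_eq k x, pos (k + 2) x]

lemma sq_add_le (m n : ℕ) (x : ℝ) :
    erfcMoment (m + n) x ^ 2 ≤ erfcMoment (m + m) x * erfcMoment (n + n) x := by
  simpa only [erfcMoment, pow_add] using
    erfcFunctional.apply_mul_sq_le x ((X - Polynomial.C x) ^ m) ((X - Polynomial.C x) ^ n)

end erfcMoment

lemma D_eq_erfcMoment (R : ℝ) : D R = 2 * erfcMoment 2 (-R) - erfcMoment 1 (-R) ^ 2 := by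
  have h₁ : erfcMoment 1 (-R) = R * erfc (-R) + Real.exp (-R ^ 2) / √Real.pi := by
    have h := erfcMoment.one_add_mul_erfc_eq (-R)
    rw [neg_sq] at h
    linarith
  have h₂ : 2 * erfcMoment 2 (-R) = erfc (-R) + 2 * R * erfcMoment 1 (-R) := by
    have h := erfcMoment.add_one_mul_eq 0 (-R)
    rw [erfcMoment.zero_eq_erfc, Nat.cast_zero, zero_add, one_mul] at h
    linarith
  rw [h₂, h₁, D]
  ring

lemma D_pos (R : ℝ) : 0 < D R := by
  rw [D_eq_erfcMoment, sub_pos]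
  calc
    erfcMoment 1 (-R) ^ 2 ≤ erfcMoment 0 (-R) * erfcMoment 2 (-R) := erfcMoment.sq_add_le 0 1 (-R)
    _ = erfc (-R) * erfcMoment 2 (-R) := by rw [erfcMoment.zero_eq_erfc]
    _ < 2 * erfcMoment 2 (-R) :=
      mul_lt_mul_of_pos_right (erfc_lt_two (-R)) (erfcMoment.pos 2 (-R))

lemma sq_mul_D_le_erfc {R : ℝ} (hR : R ≤ 0) : R ^ 2 * D R ≤ erfc (-R) := by
  have h₁ : 2 * -R * erfcMoment 1 (-R) ≤ erfcMoment 0 (-R) := by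
    simpa using erfcMoment.two_mul_mul_succ_le 0 (-R)
  have h₂ : -R * erfcMoment 2 (-R) ≤ erfcMoment 1 (-R) := by
    have h := erfcMoment.two_mul_mul_succ_le 1 (-R)
    rw [Nat.cast_one] at h
    linarith
  calc
    R ^ 2 * D R ≤ R ^ 2 * (2 * erfcMoment 2 (-R)) := by
      rw [D_eq_erfcMoment]
      exact mul_le_mul_of_nonneg_left (sub_le_self _ (sq_nonneg _)) (sq_nonneg R)
    _ = 2 * -R * (-R * erfcMoment 2 (-R)) := by ring
    _ ≤ 2 * -R * erfcMoment 1 (-R) := mul_le_mul_of_nonneg_left h₂ (by linarith)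
    _ ≤ erfcMoment 0 (-R) := h₁
    _ = erfc (-R) := erfcMoment.zero_eq_erfc (-R)

lemma sq_le_C {R : ℝ} (hR : R ≤ 0) : R ^ 2 ≤ C R :=
  (le_div_iff₀ (D_pos R)).2 (sq_mul_D_le_erfc hR)

theorem C_tendsto_atBot : Tendsto C atBot atTop := by
  have hsq : Tendsto (fun R : ℝ => R ^ 2) atBot atTop := by
    simpa only [sq, id] using tendsto_id.atBot_mul_atBot₀ tendsto_id
  refine tendsto_atTop_mono' atBot ?_ hsq
  filter_upwards [eventually_le_atBot 0] with R hR using sq_le_C hR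
end

section
/- Let Y be a real Gaussian random variable with mean μ and standard deviation σ > 0, and let X = max(Y, 0). Then σ²·P(Y > 0) / Var(X) = C(μ/(√2·σ)). -/
/-!
On a half-line, integration by parts against the density `φ` of the normal law `γ` with mean `μ` and
variance `v` is Stein's identity
`∫_{x > c} (x - μ) f(x) dγ = v (f(c) φ(c) + ∫_{x > c} f'(x) dγ)`.
With `c = 0`, the choices `f = 1` and `f = id` express the first two moments of `max Y 0` through
`φ(0)` and `P(Y > 0)`. Substituting `P(Y > 0) = erfc(-R) / 2`, where `R = μ / √(2v)`, turns the
variance of `max Y 0` into `v D(R) / 2`, and the factor `v / 2` cancels in the quotient.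
-/

open MeasureTheory Filter

section

open ProbabilityTheory Set Topology
open scoped NNReal

section Density

variable {E : Type*} [NormedAddCommGroup E] [NormedSpace ℝ E] {μ : ℝ} {v : ℝ≥0}

lemma integrableOn_gaussianReal_iff (hv : v ≠ 0) {f : ℝ → E} {s : Set ℝ} :
    IntegrableOn f s (gaussianReal μ v) ↔ IntegrableOn (fun x ↦ gaussianPDFReal μ v x • f x) s := by
  rw [IntegrableOn, gaussianReal_of_var_ne_zero μ hv, restrict_withDensity',
    integrable_withDensity_iff_integrable_smul' (measurable_gaussianPDF μ v)
      (ae_of_all _ fun _ ↦ gaussianPDF_lt_top)]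
  simp only [toReal_gaussianPDF, IntegrableOn]

lemma setIntegral_gaussianReal_eq_setIntegral_smul (hv : v ≠ 0) (f : ℝ → E) (s : Set ℝ) :
    ∫ x in s, f x ∂gaussianReal μ v = ∫ x in s, gaussianPDFReal μ v x • f x := by
  rw [gaussianReal_of_var_ne_zero μ hv,
    setIntegral_withDensity_eq_setIntegral_toReal_smul' s (measurable_gaussianPDF μ v)
      (ae_of_all _ fun _ ↦ gaussianPDF_lt_top) f]
  simp only [toReal_gaussianPDF]

end Density

lemma gaussianPDFReal_eq_exp_neg_sq_div (μ : ℝ) (v : ℝ≥0) (x : ℝ) :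
    gaussianPDFReal μ v x =
      Real.exp (-((x - μ) / √(2 * v)) ^ 2) / (√Real.pi * √(2 * v)) := by
  rw [gaussianPDFReal, div_pow, Real.sq_sqrt (by positivity), neg_div,
    ← Real.sqrt_mul Real.pi_pos.le, mul_left_comm, ← mul_assoc, inv_mul_eq_div]

lemma hasDerivAt_gaussianPDFReal (μ : ℝ) (v : ℝ≥0) (x : ℝ) :
    HasDerivAt (gaussianPDFReal μ v) (-((x - μ) / v * gaussianPDFReal μ v x)) x := by
  have hexponent : HasDerivAt (fun y ↦ -(y - μ) ^ 2 / (2 * v)) (-((x - μ) / v)) x := by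
    refine ((((hasDerivAt_id' x).sub_const μ).fun_pow 2).fun_neg.div_const _).congr_deriv ?_
    rw [← neg_div, ← mul_div_mul_left _ _ two_ne_zero]
    ring
  rw [gaussianPDFReal_def]
  exact (hexponent.exp.const_mul _).congr_deriv (by ring)

section TruncatedMoments

variable {μ : ℝ} {v : ℝ≥0} {c : ℝ}

theorem setIntegral_Ioi_sub_mul_gaussianReal (hv : v ≠ 0) {f f' : ℝ → ℝ}
    (hderiv : ∀ x ∈ Ici c, HasDerivAt f (f' x) x)
    (hf : IntegrableOn f (Ioi c) (gaussianReal μ v))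
    (hf' : IntegrableOn f' (Ioi c) (gaussianReal μ v))
    (hmul : IntegrableOn (fun x ↦ (x - μ) * f x) (Ioi c) (gaussianReal μ v)) :
    ∫ x in Ioi c, (x - μ) * f x ∂gaussianReal μ v =
      v * (f c * gaussianPDFReal μ v c + ∫ x in Ioi c, f' x ∂gaussianReal μ v) := by
  have hprod : ∀ x ∈ Ici c, HasDerivAt (fun x ↦ gaussianPDFReal μ v x • f x)
      (gaussianPDFReal μ v x • (f' x - (x - μ) * f x / v)) x := fun x hx ↦ by
    refine ((hasDerivAt_gaussianPDFReal μ v x).smul (hderiv x hx)).congr_deriv ?_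
    simp only [smul_eq_mul]
    ring
  have hint : IntegrableOn (fun x ↦ f' x - (x - μ) * f x / v) (Ioi c) (gaussianReal μ v) :=
    hf'.sub (hmul.div_const _)
  have hvol := (integrableOn_gaussianReal_iff hv).1 hint
  have hlim : Tendsto (fun x ↦ gaussianPDFReal μ v x • f x) atTop (𝓝 0) :=
    tendsto_zero_of_hasDerivAt_of_integrableOn_Ioi (fun x hx ↦ hprod x (Ioi_subset_Ici_self hx))
      hvol ((integrableOn_gaussianReal_iff hv).1 hf)
  have hftc : ∫ x in Ioi c, (f' x - (x - μ) * f x / v) ∂gaussianReal μ v =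
      0 - gaussianPDFReal μ v c • f c := by
    rw [setIntegral_gaussianReal_eq_setIntegral_smul hv]
    exact integral_Ioi_of_hasDerivAt_of_tendsto' hprod hvol hlim
  rw [integral_sub hf' (hmul.div_const _), integral_div, smul_eq_mul] at hftc
  have hv' : (v : ℝ) ≠ 0 := NNReal.coe_ne_zero.2 hv
  field_simp at hftc
  linarith

lemma integrable_id_gaussianReal : Integrable (fun x ↦ x) (gaussianReal μ v) :=
  (memLp_id_gaussianReal 1).integrable le_rfl

lemma integrable_sq_gaussianReal : Integrable (fun x ↦ x ^ 2) (gaussianReal μ v) :=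
  (memLp_id_gaussianReal 2).integrable_sq

lemma setIntegral_Ioi_id_gaussianReal (hv : v ≠ 0) :
    ∫ x in Ioi c, x ∂gaussianReal μ v =
      μ * (gaussianReal μ v).real (Ioi c) + v * gaussianPDFReal μ v c := by
  have hid : IntegrableOn (fun x ↦ x) (Ioi c) (gaussianReal μ v) :=
    integrable_id_gaussianReal.integrableOn
  have hstein := setIntegral_Ioi_sub_mul_gaussianReal hv
    (fun x _ ↦ hasDerivAt_const x (1 : ℝ)) (integrable_const _) integrableOn_zero
    (by simpa only [mul_one] using hid.fun_sub (integrable_const μ))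
  simp only [mul_one, one_mul, integral_zero, add_zero] at hstein
  rw [integral_sub hid (integrable_const _), setIntegral_const, smul_eq_mul] at hstein
  linarith

lemma setIntegral_Ioi_sq_gaussianReal (hv : v ≠ 0) :
    ∫ x in Ioi c, x ^ 2 ∂gaussianReal μ v =
      μ * (∫ x in Ioi c, x ∂gaussianReal μ v) +
        v * (c * gaussianPDFReal μ v c + (gaussianReal μ v).real (Ioi c)) := by
  have hid : IntegrableOn (fun x ↦ x) (Ioi c) (gaussianReal μ v) :=
    integrable_id_gaussianReal.integrableOn
  have hsq : IntegrableOn (fun x ↦ x ^ 2) (Ioi c) (gaussianReal μ v) :=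
    integrable_sq_gaussianReal.integrableOn
  have hexpand (x : ℝ) : (x - μ) * x = x ^ 2 - μ * x := by ring
  have hstein := setIntegral_Ioi_sub_mul_gaussianReal hv
    (fun x _ ↦ hasDerivAt_id' x) hid (integrable_const _)
    (by simpa only [hexpand] using hsq.fun_sub (hid.const_mul μ))
  simp only [hexpand] at hstein
  rw [integral_sub hsq (hid.const_mul μ), integral_const_mul, setIntegral_const, smul_eq_mul,
    mul_one] at hstein
  linarith

end TruncatedMoments

-- Variance `1 / 2` is the one for which the centred density is `exp (-t ^ 2) / √π`, as in `erfc`.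
lemma gaussianReal_map_sub_div_sqrt (μ : ℝ) {v : ℝ≥0} (hv : v ≠ 0) :
    (gaussianReal μ v).map (fun x ↦ (x - μ) / √(2 * v)) = gaussianReal 0 (1 / 2) := by
  have hvar : v / .mk (√(2 * v : ℝ) ^ 2) (sq_nonneg _) = 1 / 2 := by
    ext
    have hv' : (v : ℝ) ≠ 0 := NNReal.coe_ne_zero.2 hv
    simp only [NNReal.coe_div, NNReal.coe_mk, Real.sq_sqrt (by positivity : (0 : ℝ) ≤ 2 * v)]
    push_cast
    field_simp
  have hcomp : (fun x ↦ (x - μ) / √(2 * v : ℝ)) = (· / √(2 * v : ℝ)) ∘ (· - μ) := rfl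
  rw [hcomp, ← Measure.map_map (by fun_prop) (by fun_prop), gaussianReal_map_sub_const,
    gaussianReal_map_div_const, hvar, sub_self, zero_div]

lemma gaussianReal_zero_half_real_Ioi (x : ℝ) :
    (gaussianReal 0 (1 / 2)).real (Ioi x) = erfc x / 2 := by
  have hpdf (t : ℝ) : gaussianPDFReal 0 (1 / 2) t = (√Real.pi)⁻¹ * Real.exp (-t ^ 2) := by
    rw [gaussianPDFReal_eq_exp_neg_sq_div]
    simp [div_eq_inv_mul]
  rw [measureReal_def, gaussianReal_apply_eq_integral 0 (by simp), ENNReal.toReal_ofReal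
    (setIntegral_nonneg measurableSet_Ioi fun t _ ↦ gaussianPDFReal_nonneg _ _ t), erfc]
  simp only [hpdf, integral_const_mul]
  ring

theorem gaussianReal_real_Ioi (μ : ℝ) {v : ℝ≥0} (hv : v ≠ 0) (c : ℝ) :
    (gaussianReal μ v).real (Ioi c) = erfc ((c - μ) / √(2 * v)) / 2 := by
  have hs : 0 < √(2 * v : ℝ) := by positivity
  have hpreimage : (fun x ↦ (x - μ) / √(2 * v : ℝ)) ⁻¹' Ioi ((c - μ) / √(2 * v)) = Ioi c := by
    ext x
    simp only [mem_preimage, mem_Ioi, div_lt_div_iff_of_pos_right hs, sub_lt_sub_iff_right]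
  rw [← gaussianReal_zero_half_real_Ioi, ← gaussianReal_map_sub_div_sqrt μ hv,
    map_measureReal_apply (by fun_prop) measurableSet_Ioi, hpreimage]

lemma integral_max_zero_pow (γ : Measure ℝ) {n : ℕ} (hn : n ≠ 0) :
    ∫ x, max x 0 ^ n ∂γ = ∫ x in Ioi 0, x ^ n ∂γ := by
  rw [← integral_indicator measurableSet_Ioi]
  congr 1 with x
  rcases lt_or_ge 0 x with hx | hx
  · rw [indicator_of_mem (mem_Ioi.2 hx), max_eq_left hx.le]
  · rw [indicator_of_notMem (notMem_Ioi.2 hx), max_eq_right hx, zero_pow hn]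

lemma integral_max_zero_gaussianReal (μ : ℝ) {v : ℝ≥0} (hv : v ≠ 0) :
    ∫ x, max x 0 ∂gaussianReal μ v =
      μ * (gaussianReal μ v).real (Ioi 0) + v * gaussianPDFReal μ v 0 := by
  simpa only [pow_one, setIntegral_Ioi_id_gaussianReal hv]
    using integral_max_zero_pow (gaussianReal μ v) one_ne_zero

lemma integral_max_zero_sq_gaussianReal (μ : ℝ) {v : ℝ≥0} (hv : v ≠ 0) :
    ∫ x, max x 0 ^ 2 ∂gaussianReal μ v =
      μ * (∫ x, max x 0 ∂gaussianReal μ v) + v * (gaussianReal μ v).real (Ioi 0) := by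
  rw [integral_max_zero_pow _ two_ne_zero, setIntegral_Ioi_sq_gaussianReal hv,
    integral_max_zero_gaussianReal μ hv, setIntegral_Ioi_id_gaussianReal hv, zero_mul, zero_add]

theorem variance_max_zero_gaussianReal (μ : ℝ) {v : ℝ≥0} (hv : v ≠ 0) :
    Var[fun x ↦ max x 0; gaussianReal μ v] = v * (D (μ / √(2 * v)) / 2) := by
  have hrelu : MemLp (fun x ↦ max x 0) 2 (gaussianReal μ v) := (memLp_id_gaussianReal 2).pos_part
  set s := √(2 * v : ℝ) with hs
  have hs0 : s ≠ 0 := by positivity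
  have hsv : (v : ℝ) = s ^ 2 / 2 := by rw [hs, Real.sq_sqrt (by positivity)]; ring
  have hπ : √Real.pi ≠ 0 := by positivity
  rw [variance_eq_sub hrelu]
  simp only [Pi.pow_apply]
  rw [integral_max_zero_sq_gaussianReal μ hv, integral_max_zero_gaussianReal μ hv,
    gaussianReal_real_Ioi μ hv, gaussianPDFReal_eq_exp_neg_sq_div, zero_sub, ← hs, neg_div, neg_sq,
    hsv, D]
  field_simp
  ring

end

open ProbabilityTheory in
theorem explosion_rate_eq_C {Ω : Type*} [MeasurableSpace Ω] (P : Measure Ω)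
    [IsProbabilityMeasure P] (μ σ : ℝ) (hσ : 0 < σ) (Y : Ω → ℝ)
    (hY : P.map Y = gaussianReal μ ⟨σ ^ 2, sq_nonneg σ⟩) :
    σ ^ 2 * (P {ω | 0 < Y ω}).toReal / variance (fun ω => max (Y ω) 0) P =
      C (μ / (Real.sqrt 2 * σ)) := by
  set v : NNReal := ⟨σ ^ 2, sq_nonneg σ⟩
  have hv : v ≠ 0 := NNReal.coe_ne_zero.1 (pow_ne_zero 2 hσ.ne')
  have hvσ : (v : ℝ) = σ ^ 2 := rfl
  have hsqrt : √(2 * v : ℝ) = √2 * σ := by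
    rw [hvσ, Real.sqrt_mul zero_le_two, Real.sqrt_sq hσ.le]
  have : IsProbabilityMeasure (P.map Y) := hY ▸ inferInstance
  have hlaw : HasLaw Y (gaussianReal μ v) P := ⟨aemeasurable_of_map_neZero inferInstance, hY⟩
  have hprob : (P {ω | 0 < Y ω}).toReal = erfc (-(μ / (√2 * σ))) / 2 := by
    rw [hlaw.measure_eq measurableSet_Ioi]
    exact (gaussianReal_real_Ioi μ hv 0).trans (by rw [hsqrt, zero_sub, neg_div])
  have hvar : Var[fun ω ↦ max (Y ω) 0; P] = σ ^ 2 * (D (μ / (√2 * σ)) / 2) := by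
    rw [← hsqrt, ← hvσ, ← variance_max_zero_gaussianReal μ hv, ← hY]
    exact (variance_map (X := (max · 0)) (by fun_prop) hlaw.aemeasurable).symm
  rw [hprob, hvar, C, mul_div_mul_left _ _ (by positivity), div_div_div_cancel_right₀ two_ne_zero]
end

section
/- Let b be a standard Gaussian random variable, and let t, w ∈ ℝ^d be fixed vectors. Set P = Σ_{i=1}^d w_i·max(t_i, 0) and N = Σ_{i=1}^d w_i·max(−t_i, 0). Then Var_b( Σ_{i=1}^d w_i·max(b·t_i, 0) ) = (P² + N²)/2 − (P + N)²/(2π). -/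
open MeasureTheory ProbabilityTheory

/-!
Since `2 * max y 0 = y + |y|`, the random sum is half of `(p - n) * b + (p + n) * |b|`, where
`p = ∑ wᵢ tᵢ⁺` and `n = ∑ wᵢ tᵢ⁻`. As `b` is symmetric, the odd function `b` and the even function
`|b|` are uncorrelated, so their variances `1` and `1 - 2 / π` simply add up with the weights
`((p - n) / 2) ^ 2` and `((p + n) / 2) ^ 2`.
-/

open scoped NNReal

section OddEven

variable {G : Type*} [AddGroup G] [MeasurableSpace G] [MeasurableNeg G] {μ : Measure G}
  [μ.IsNegInvariant]

lemma integral_eq_zero_of_odd {E : Type*} [NormedAddCommGroup E] [NormedSpace ℝ E] {f : G → E}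
    (hf : f.Odd) : ∫ x, f x ∂μ = 0 := by
  have h : ∫ x, f x ∂μ = -∫ x, f x ∂μ :=
    calc ∫ x, f x ∂μ = ∫ x, f (-x) ∂μ := (integral_neg_eq_self f μ).symm
      _ = -∫ x, f x ∂μ := by simp only [hf.eq, integral_neg]
  have : IsAddTorsionFree E := .of_isTorsionFree ℝ E
  exact self_eq_neg.mp h

lemma covariance_eq_zero_of_odd_of_even {f g : G → ℝ} (hf : f.Odd) (hg : g.Even) :
    cov[f, g; μ] = 0 := by
  simp only [covariance, integral_eq_zero_of_odd hf, sub_zero]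
  exact integral_eq_zero_of_odd fun x ↦ by rw [hf.eq, hg.eq, neg_mul]

end OddEven

lemma variance_mul_id_add_mul_abs {μ : Measure ℝ} [IsFiniteMeasure μ] [μ.IsNegInvariant]
    (hμ : MemLp (fun x ↦ x) 2 μ) (a c : ℝ) :
    Var[fun x ↦ a * x + c * |x|; μ] = a ^ 2 * Var[fun x ↦ x; μ] + c ^ 2 * Var[fun x ↦ |x|; μ] := by
  have h_abs : MemLp (fun x ↦ |x|) 2 μ := hμ.abs
  have h_cov : cov[fun x : ℝ ↦ a * x, fun x ↦ c * |x|; μ] = 0 :=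
    covariance_eq_zero_of_odd_of_even (fun x ↦ mul_neg a x) fun x ↦ by rw [abs_neg]
  rw [variance_fun_add (hμ.const_mul a) (h_abs.const_mul c), h_cov, mul_zero, add_zero,
    variance_const_mul, variance_const_mul]

instance isNegInvariant_gaussianReal (v : ℝ≥0) : (gaussianReal 0 v).IsNegInvariant where
  neg_eq_self := gaussianReal_map_neg.trans (by rw [neg_zero])

lemma integral_abs_mul_exp_neg_mul_sq {b : ℝ} (hb : 0 < b) :
    ∫ x : ℝ, |x| * Real.exp (-b * x ^ 2) = b⁻¹ := by
  have h_half : ∫ x in Set.Ioi (0 : ℝ), x * Real.exp (-b * x ^ 2) = (2 * b)⁻¹ := by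
    have h := integral_mul_cexp_neg_mul_sq (b := b) (by simpa using hb)
    exact_mod_cast h
  calc ∫ x : ℝ, |x| * Real.exp (-b * x ^ 2)
      = ∫ x : ℝ, |x| * Real.exp (-b * |x| ^ 2) := by simp only [sq_abs]
    _ = 2 * ∫ x in Set.Ioi (0 : ℝ), x * Real.exp (-b * x ^ 2) :=
        integral_comp_abs (f := fun x ↦ x * Real.exp (-b * x ^ 2))
    _ = b⁻¹ := by rw [h_half]; field

lemma integral_abs_gaussianReal (v : ℝ≥0) :
    ∫ x, |x| ∂gaussianReal 0 v = √(2 * v / Real.pi) := by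
  obtain rfl | hv := eq_or_ne v 0
  · simp
  calc ∫ x, |x| ∂gaussianReal 0 v
      = ∫ x, (√(2 * Real.pi * v))⁻¹ * (|x| * Real.exp (-(2 * v : ℝ)⁻¹ * x ^ 2)) := by
        rw [integral_gaussianReal_eq_integral_smul hv]
        congr with x
        rw [gaussianPDFReal, smul_eq_mul, sub_zero, neg_div, div_eq_inv_mul, ← neg_mul]
        ring
    _ = (√(2 * Real.pi * v))⁻¹ * (2 * v) := by
        rw [integral_const_mul, integral_abs_mul_exp_neg_mul_sq (by positivity), inv_inv]
    _ = √(2 * v / Real.pi) := by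
        rw [eq_comm, Real.sqrt_eq_iff_mul_self_eq (by positivity) (by positivity)]
        field_simp
        exact Real.sq_sqrt (by positivity)

lemma variance_abs_gaussianReal (v : ℝ≥0) :
    Var[fun x ↦ |x|; gaussianReal 0 v] = v * (1 - 2 / Real.pi) := by
  have h_sq : ∫ x, x ^ 2 ∂gaussianReal 0 v = v := by
    rw [← variance_fun_id_gaussianReal (μ := 0),
      variance_of_integral_eq_zero aemeasurable_id' integral_id_gaussianReal]
  have h_abs : MemLp (fun x : ℝ ↦ |x|) 2 (gaussianReal 0 v) := (memLp_id_gaussianReal 2).abs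
  rw [variance_eq_sub h_abs, integral_abs_gaussianReal, Real.sq_sqrt (by positivity)]
  simp only [Pi.pow_apply, sq_abs, h_sq]
  ring

lemma sum_mul_max_mul_zero {ι K : Type*} [Field K] [LinearOrder K] [IsStrictOrderedRing K]
    (s : Finset ι) (w t : ι → K) (x : K) :
    ∑ i ∈ s, w i * max (x * t i) 0 =
      (∑ i ∈ s, w i * t i) / 2 * x + (∑ i ∈ s, w i * |t i|) / 2 * |x| := by
  have h_relu (y : K) : max y 0 = (y + |y|) / 2 := by
    linarith [max_zero_add_max_neg_zero_eq_abs_self y, max_zero_sub_max_neg_zero_eq_self y]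
  simp only [Finset.sum_div, Finset.sum_mul, ← Finset.sum_add_distrib, h_relu, abs_mul]
  exact Finset.sum_congr rfl fun i _ ↦ by ring

theorem relu_correlated_variance_general {Ω ι : Type*} [MeasurableSpace Ω] {P : Measure Ω}
    {b : Ω → ℝ} {v : ℝ≥0} (hb : HasLaw b (gaussianReal 0 v) P) (s : Finset ι) (t w : ι → ℝ) :
    Var[fun ω ↦ ∑ i ∈ s, w i * max (b ω * t i) 0; P] =
      v * (((∑ i ∈ s, w i * max (t i) 0) ^ 2 + (∑ i ∈ s, w i * max (-t i) 0) ^ 2) / 2 -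
        ((∑ i ∈ s, w i * max (t i) 0) + (∑ i ∈ s, w i * max (-t i) 0)) ^ 2 /
          (2 * Real.pi)) := by
  set p := ∑ i ∈ s, w i * max (t i) 0 with hp
  set n := ∑ i ∈ s, w i * max (-t i) 0 with hn
  have h_sub : ∑ i ∈ s, w i * t i = p - n := by
    simp only [hp, hn, ← Finset.sum_sub_distrib, ← mul_sub, max_zero_sub_max_neg_zero_eq_self]
  have h_add : ∑ i ∈ s, w i * |t i| = p + n := by
    simp only [hp, hn, ← Finset.sum_add_distrib, ← mul_add, max_zero_add_max_neg_zero_eq_abs_self]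
  calc Var[fun ω ↦ ∑ i ∈ s, w i * max (b ω * t i) 0; P]
      = Var[fun ω ↦ (p - n) / 2 * b ω + (p + n) / 2 * |b ω|; P] := by
        simp only [sum_mul_max_mul_zero, h_sub, h_add]
    _ = Var[fun x ↦ (p - n) / 2 * x + (p + n) / 2 * |x|; gaussianReal 0 v] := by
        rw [← hb.map_eq, variance_map (by fun_prop) hb.aemeasurable, Function.comp_def]
    _ = ((p - n) / 2) ^ 2 * v + ((p + n) / 2) ^ 2 * (v * (1 - 2 / Real.pi)) := by
        rw [variance_mul_id_add_mul_abs (memLp_id_gaussianReal 2), variance_fun_id_gaussianReal,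
          variance_abs_gaussianReal]
    _ = v * ((p ^ 2 + n ^ 2) / 2 - (p + n) ^ 2 / (2 * Real.pi)) := by ring

theorem relu_correlated_variance {Ω : Type*} [MeasurableSpace Ω] (P : Measure Ω)
    [IsProbabilityMeasure P] (b : Ω → ℝ) (hb : P.map b = gaussianReal 0 1)
    (d : ℕ) (t w : Fin d → ℝ) :
    variance (fun ω => ∑ i, w i * max (b ω * t i) 0) P =
      ((∑ i, w i * max (t i) 0) ^ 2 + (∑ i, w i * max (-t i) 0) ^ 2) / 2 -
        ((∑ i, w i * max (t i) 0) + (∑ i, w i * max (-t i) 0)) ^ 2 / (2 * Real.pi) := by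
  -- `Measure.map` along a non-a.e.-measurable map is `0`, so `hb` forces measurability.
  have hbm : AEMeasurable b P := .of_map_ne_zero (hb ▸ IsProbabilityMeasure.ne_zero _)
  simpa using relu_correlated_variance_general ⟨hbm, hb⟩ Finset.univ t w
end
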